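/- arXiv:2509.16344 — 2 statements merged into one kernel-verified Lean document; each statement's English description precedes it below -/
import Mathlib

section
/- Let $(X,\|\cdot\|)$ be a real or complex normed linear space, and for a subspace $Y\subset X$ and $x\in X$ let $\rho(x,Y)=\inf\{\|x-y\|: y\in Y\}$. Let $n\ge 1$, let $Y_1\subset Y_2\subset\cdots\subset Y_n\subset X$ be a finite system of strictly nested linear subspaces ($Y_k\ne Y_{k+1}$ for $1\le k<n$), let $d_1,\dots,d_n$ be real numbers with $d_n\ge 0$, and let $z\in X$ be an element not belonging to the closure $\overline{Y_n}$. Consider the assertion (L) there exist $x\in X$ and a real number $\lambda\ge 0$ such that $\rho(x,Y_k)=d_k$ for $k=1,\dots,n$, $\|x\|\le d_1+1$, and $x-\lambda z\in Y_n$; moreover $\lambda>0$ if $d_n>0$. (1) If $Y_{k+1}\not\subset\overline{Y_k}$ for $1\le k<n$ (for example, if all $Y_k$ are closed, or if $\overline{Y_k}\subsetneq Y_{k+1}$ for $1\le k<n$) and $d_1>d_2>\cdots>d_n\ge 0$, then (L) holds. (2) If all $Y_k$ are existence subspaces (that is, every $x\in X$ has some $y\in Y_k$ with $\|x-y\|=\rho(x,Y_k)$),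 then (L) holds whenever $d_1\ge d_2\ge\cdots\ge d_n\ge 0$. In particular, this is so if all $Y_k$ are finite-dimensional, or if $X$ is reflexive and all $Y_k$ are closed. -/
/-- `Y` is an existence (proximinal) subspace of `X`: every `x : X` has a best approximation
in `Y`. -/
def IsExistenceSubspace {𝕜 X : Type*} [RCLike 𝕜] [NormedAddCommGroup X] [NormedSpace 𝕜 X]
    (Y : Submodule 𝕜 X) : Prop :=
  ∀ x : X, ∃ y ∈ Y, ‖x - y‖ = Metric.infDist x (Y : Set X)

/-- `X` is reflexive: the canonical embedding into the bidual is onto. -/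
def IsReflexiveSpace (𝕜 X : Type*) [RCLike 𝕜] [NormedAddCommGroup X] [NormedSpace 𝕜 X] : Prop :=
  Function.Surjective (NormedSpace.inclusionInDoubleDual 𝕜 X)

/-- There are `x` and a real `lam ≥ 0` with `ρ(x, Y k) = d k` for all `k`, `‖x‖ ≤ d 0 + 1` and
`x - lam z ∈ Y n`, where `n` is the last index; moreover `lam > 0` whenever `d n > 0`.
(If `d n = 0` and `z` is not in the closure of `Y n`, then `lam = 0` is forced.) -/
def HasLethargyElement {𝕜 X : Type*} [RCLike 𝕜] [NormedAddCommGroup X] [NormedSpace 𝕜 X]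
    {n : ℕ} (Y : Fin (n + 1) → Submodule 𝕜 X) (d : Fin (n + 1) → ℝ) (z : X) : Prop :=
  ∃ (x : X) (lam : ℝ), (∀ k, Metric.infDist x (Y k : Set X) = d k) ∧ ‖x‖ ≤ d 0 + 1 ∧
    x - (lam : 𝕜) • z ∈ Y (Fin.last n) ∧ 0 ≤ lam ∧ (0 < d (Fin.last n) → 0 < lam)

/-!
Start from the multiple of `z` at distance `d n` from `Y n` and correct it by elements of
`Y n, …, Y 1` in turn. An element of `Y (k + 1)` does not change the distances to the later
subspaces, so at stage `k` only the distance to `Y k` has to be arranged: first subtract an element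
of `Y (k + 1)` that brings the norm down to at most `d k` (a near-best approximation when `d` is
strictly decreasing, a best one when the subspaces are existence subspaces), then move in a
direction of `Y (k + 1)` outside the closure of `Y k` until the distance reaches exactly `d k`.
Subtracting a near-best approximation from `Y 0` finally controls the norm.
-/

section Quotient

variable {R M : Type*} [Ring R] [SeminormedAddCommGroup M] [Module R M]

theorem norm_mkQ_eq_infDist (Y : Submodule R M) (x : M) :
    ‖Y.mkQ x‖ = Metric.infDist x (Y : Set M) :=
  QuotientAddGroup.norm_mk (S := Y.toAddSubgroup) x

theorem infDist_add_of_mem {Y : Submodule R M} {y : M} (hy : y ∈ Y) (x : M) :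
    Metric.infDist (x + y) (Y : Set M) = Metric.infDist x (Y : Set M) := by
  simp only [← norm_mkQ_eq_infDist, map_add, (Submodule.Quotient.mk_eq_zero Y).2 hy,
    Submodule.mkQ_apply, add_zero]

theorem exists_mem_norm_sub_lt_of_infDist_lt {Y : Submodule R M} {x : M} {r : ℝ}
    (h : Metric.infDist x (Y : Set M) < r) : ∃ y ∈ Y, ‖x - y‖ < r := by
  simpa only [dist_eq_norm, SetLike.mem_coe] using (Metric.infDist_lt_iff ⟨0, Y.zero_mem⟩).1 h

end Quotient

theorem infDist_smul {𝕜 E : Type*} [NormedField 𝕜] [SeminormedAddCommGroup E] [NormedSpace 𝕜 E]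
    (Y : Submodule 𝕜 E) (c : 𝕜) (x : E) :
    Metric.infDist (c • x) (Y : Set E) = ‖c‖ * Metric.infDist x (Y : Set E) := by
  rw [← norm_mkQ_eq_infDist, ← norm_mkQ_eq_infDist, map_smul, norm_smul]

section SuccessiveCorrection

variable {𝕜 E : Type*} [RCLike 𝕜] [SeminormedAddCommGroup E] [NormedSpace 𝕜 E]

theorem exists_norm_add_smul_eq {v w : E} (hw : ‖w‖ ≠ 0) {r : ℝ} (hr : ‖v‖ ≤ r) :
    ∃ t : 𝕜, ‖v + t • w‖ = r := by
  have hcont : Continuous fun t : ℝ ↦ ‖v + (t : 𝕜) • w‖ := by fun_prop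
  have hlarge : ∃ t : ℝ, r ≤ ‖v + (t : 𝕜) • w‖ := by
    let t : ℝ := (r + ‖v‖) / ‖w‖
    have hsmul : r + ‖v‖ ≤ ‖(t : 𝕜) • w‖ := by
      rw [norm_smul, RCLike.norm_ofReal, ← div_le_iff₀ (hw.symm.lt_of_le (norm_nonneg w))]
      exact le_abs_self t
    exact ⟨t, by linarith [norm_le_add_norm_add' v ((t : 𝕜) • w)]⟩
  obtain ⟨t, ht⟩ := mem_range_of_exists_le_of_exists_ge hcont ⟨0, by simpa using hr⟩ hlarge
  exact ⟨t, ht⟩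

theorem exists_mem_infDist_add_eq {Y Z : Submodule 𝕜 E}
    (hZY : ¬ (Z : Set E) ⊆ closure (Y : Set E)) {x y : E} (hy : y ∈ Z) {r : ℝ}
    (hr : ‖x - y‖ ≤ r) : ∃ u ∈ Z, Metric.infDist (x + u) (Y : Set E) = r := by
  obtain ⟨w, hwZ, hwY⟩ := Set.not_subset.1 hZY
  have hw : ‖Y.mkQ w‖ ≠ 0 := by
    rw [norm_mkQ_eq_infDist]
    exact ((Metric.infDist_pos_iff_notMem_closure ⟨0, Y.zero_mem⟩).1 hwY).ne'
  have hv : ‖Y.mkQ (x - y)‖ ≤ r := (Submodule.Quotient.norm_mk_le Y _).trans hr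
  obtain ⟨t, ht⟩ := exists_norm_add_smul_eq (𝕜 := 𝕜) hw hv
  refine ⟨t • w - y, sub_mem (Z.smul_mem t hwZ) hy, ?_⟩
  rw [← norm_mkQ_eq_infDist, ← ht, ← map_smul, ← map_add, sub_add_eq_add_sub, add_sub_assoc]

theorem exists_sub_mem_forall_infDist_eq {n : ℕ} {Y : Fin (n + 1) → Submodule 𝕜 E}
    (hmono : Monotone Y) {d : Fin (n + 1) → ℝ}
    (hY : ∀ k : Fin n, ¬ (Y k.succ : Set E) ⊆ closure (Y k.castSucc : Set E))
    (happrox : ∀ (k : Fin n) (x : E), Metric.infDist x (Y k.succ : Set E) = d k.succ →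
      ∃ y ∈ Y k.succ, ‖x - y‖ ≤ d k.castSucc)
    {x₀ : E} (hx₀ : Metric.infDist x₀ (Y (Fin.last n) : Set E) = d (Fin.last n)) :
    ∃ x, x - x₀ ∈ Y (Fin.last n) ∧ ∀ k, Metric.infDist x (Y k : Set E) = d k := by
  induction n with
  | zero => exact ⟨x₀, by simp, Fin.cases hx₀ fun k ↦ k.elim0⟩
  | succ n ih =>
    obtain ⟨x, hxx₀, hx⟩ := ih (Y := fun k ↦ Y k.succ) (d := fun k ↦ d k.succ)
      (hmono.comp Fin.strictMono_succ.monotone) (fun k ↦ hY k.succ)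
      (fun k ↦ happrox k.succ) hx₀
    obtain ⟨y, hy, hxy⟩ := happrox 0 x (hx 0)
    obtain ⟨u, hu, hxu⟩ := exists_mem_infDist_add_eq (hY 0) hy hxy
    have hu_mem (k : Fin (n + 1)) : u ∈ Y k.succ :=
      hmono (Fin.succ_le_succ_iff.2 (Fin.zero_le k)) hu
    refine ⟨x + u, ?_, Fin.cases hxu fun k ↦ (infDist_add_of_mem (hu_mem k) x).trans (hx k)⟩
    rw [add_sub_right_comm]
    exact add_mem hxx₀ (hu_mem (Fin.last n))

end SuccessiveCorrection

theorem exists_mem_infDist_eq_dist_of_properSpace {α : Type*} [PseudoMetricSpace α] {s : Set α}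
    [ProperSpace s] (hs : s.Nonempty) (x : α) : ∃ y ∈ s, Metric.infDist x s = dist x y := by
  have := hs.to_subtype
  have hlim : Filter.Tendsto (fun y : s ↦ dist x y) (Filter.cocompact s) Filter.atTop := by
    rw [← Metric.cobounded_eq_cocompact]
    exact (Metric.tendsto_dist_left_cobounded_atTop x).comp
      isometry_subtype_coe.antilipschitz.tendsto_cobounded
  obtain ⟨y, hy⟩ := Continuous.exists_forall_le (by fun_prop) hlim
  exact ⟨y, y.2, (Metric.infDist_le_dist_of_mem y.2).antisymm
    ((Metric.le_infDist hs).2 fun {z} hz ↦ hy ⟨z, hz⟩)⟩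

theorem norm_apply_le_opNorm_mul_infDist {𝕜 E F : Type*} [NontriviallyNormedField 𝕜]
    [SeminormedAddCommGroup E] [NormedSpace 𝕜 E] [SeminormedAddCommGroup F] [NormedSpace 𝕜 F]
    (f : E →L[𝕜] F) {s : Set E} (hs : s.Nonempty) (hf : ∀ y ∈ s, f y = 0) (x : E) :
    ‖f x‖ ≤ ‖f‖ * Metric.infDist x s := by
  have := hs.to_subtype
  rw [Metric.infDist_eq_iInf, Real.mul_iInf_of_nonneg (norm_nonneg f)]
  refine le_ciInf fun y ↦ ?_
  simpa only [dist_eq_norm, map_sub, hf y y.2, sub_zero] using f.le_opNorm (x - y)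

section HahnBanach

variable {𝕜 E : Type*} [RCLike 𝕜] [SeminormedAddCommGroup E] [NormedSpace 𝕜 E]

theorem exists_mem_polarSubmodule_apply_ne_zero {Y : Submodule 𝕜 E} (hY : IsClosed (Y : Set E))
    {x : E} (hx : x ∉ Y) : ∃ f ∈ StrongDual.polarSubmodule 𝕜 Y, f x ≠ 0 := by
  have hx' : Y.mkQ x ≠ 0 := mt (Submodule.Quotient.mk_eq_zero Y).1 hx
  obtain ⟨g, hg⟩ := SeparatingDual.exists_ne_zero (R := 𝕜) hx'
  refine ⟨g ∘L Y.mkQL, (StrongDual.mem_polarSubmodule 𝕜 Y _).2 fun y hy ↦ ?_, hg⟩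
  exact (congrArg g ((Submodule.Quotient.mk_eq_zero Y).2 hy)).trans (map_zero g)

theorem exists_strongDual_norm_le_of_forall_mem_norm_le (A : Submodule 𝕜 E) (f : StrongDual 𝕜 E)
    {r : ℝ} (hr : 0 ≤ r) (hf : ∀ x ∈ A, ‖f x‖ ≤ r * ‖x‖) :
    ∃ g : StrongDual 𝕜 E, ‖g‖ ≤ r ∧ ∀ x ∈ A, g x = f x := by
  obtain ⟨g, hg, hgnorm⟩ := exists_extension_norm_eq A (f.comp A.subtypeL)
  exact ⟨g, hgnorm.trans_le (ContinuousLinearMap.opNorm_le_bound _ hr fun x ↦ hf x x.2),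
    fun x hx ↦ hg ⟨x, hx⟩⟩

theorem exists_doubleDual_norm_le_infDist (Y : Submodule 𝕜 E) (x : E) :
    ∃ φ : StrongDual 𝕜 (StrongDual 𝕜 E), ‖φ‖ ≤ Metric.infDist x (Y : Set E) ∧
      ∀ f ∈ StrongDual.polarSubmodule 𝕜 Y, φ f = f x := by
  refine exists_strongDual_norm_le_of_forall_mem_norm_le _
    (NormedSpace.inclusionInDoubleDual 𝕜 E x) Metric.infDist_nonneg fun f hf ↦ ?_
  rw [mul_comm]
  exact norm_apply_le_opNorm_mul_infDist f ⟨0, Y.zero_mem⟩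
    ((StrongDual.mem_polarSubmodule 𝕜 Y f).1 hf) x

end HahnBanach

section Lethargy

variable {𝕜 X : Type*} [RCLike 𝕜] [NormedAddCommGroup X] [NormedSpace 𝕜 X]

theorem IsExistenceSubspace.isClosed {Y : Submodule 𝕜 X} (hY : IsExistenceSubspace Y) :
    IsClosed (Y : Set X) := by
  refine isClosed_of_closure_subset fun x hx ↦ ?_
  obtain ⟨y, hy, hxy⟩ := hY x
  rw [Metric.infDist_zero_of_mem_closure hx, norm_sub_eq_zero_iff] at hxy
  exact hxy ▸ hy

theorem IsExistenceSubspace.of_properSpace (Y : Submodule 𝕜 X) [ProperSpace Y] :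
    IsExistenceSubspace Y := fun x ↦ by
  obtain ⟨y, hy, hxy⟩ :=
    exists_mem_infDist_eq_dist_of_properSpace (s := (Y : Set X)) ⟨0, Y.zero_mem⟩ x
  exact ⟨y, hy, (dist_eq_norm x y).symm.trans hxy.symm⟩

theorem IsReflexiveSpace.isExistenceSubspace (hX : IsReflexiveSpace 𝕜 X) {Y : Submodule 𝕜 X}
    (hY : IsClosed (Y : Set X)) : IsExistenceSubspace Y := fun x ↦ by
  obtain ⟨φ, hφ, hφx⟩ := exists_doubleDual_norm_le_infDist Y x
  obtain ⟨u, rfl⟩ := hX φ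
  have hu : ‖u‖ ≤ Metric.infDist x (Y : Set X) :=
    ((NormedSpace.inclusionInDoubleDualLi 𝕜 (E := X)).norm_map u).symm.trans_le hφ
  have hmem : x - u ∈ Y := by
    by_contra hxu
    obtain ⟨f, hf, hfxu⟩ := exists_mem_polarSubmodule_apply_ne_zero hY hxu
    exact hfxu ((map_sub f x u).trans (sub_eq_zero.2 (hφx f hf).symm))
  refine ⟨x - u, hmem, le_antisymm ?_ ?_⟩
  · rwa [sub_sub_cancel]
  · exact (Metric.infDist_le_dist_of_mem hmem).trans_eq (dist_eq_norm _ _)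

variable {n : ℕ} {Y : Fin (n + 1) → Submodule 𝕜 X} {d : Fin (n + 1) → ℝ} {z : X}

theorem HasLethargyElement.of_exists_norm_sub_le (hmono : Monotone Y) (hd : 0 ≤ d (Fin.last n))
    (hz : z ∉ closure (Y (Fin.last n) : Set X))
    (hY : ∀ k : Fin n, ¬ (Y k.succ : Set X) ⊆ closure (Y k.castSucc : Set X))
    (happrox : ∀ (k : Fin n) (x : X), Metric.infDist x (Y k.succ : Set X) = d k.succ →
      ∃ y ∈ Y k.succ, ‖x - y‖ ≤ d k.castSucc) :
    HasLethargyElement Y d z := by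
  have hpos := (Metric.infDist_pos_iff_notMem_closure ⟨0, (Y (Fin.last n)).zero_mem⟩).1 hz
  set lam : ℝ := d (Fin.last n) / Metric.infDist z (Y (Fin.last n) : Set X)
  have hlam : 0 ≤ lam := by positivity
  have hstart : Metric.infDist ((lam : 𝕜) • z) (Y (Fin.last n) : Set X) = d (Fin.last n) := by
    rw [infDist_smul, RCLike.norm_of_nonneg hlam, div_mul_cancel₀ _ hpos.ne']
  obtain ⟨x, hxz, hx⟩ := exists_sub_mem_forall_infDist_eq hmono hY happrox hstart
  obtain ⟨y, hy, hxy⟩ := exists_mem_norm_sub_lt_of_infDist_lt ((hx 0).trans_lt (lt_add_one (d 0)))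
  have hy_mem (k) : -y ∈ Y k := neg_mem (hmono (Fin.zero_le k) hy)
  rw [sub_eq_add_neg] at hxy
  refine ⟨x + -y, lam, fun k ↦ (infDist_add_of_mem (hy_mem k) x).trans (hx k), hxy.le, ?_, hlam,
    fun hd ↦ div_pos hd hpos⟩
  rw [add_sub_right_comm]
  exact add_mem hxz (hy_mem _)

theorem HasLethargyElement.of_strictAnti (hmono : Monotone Y) (hd : 0 ≤ d (Fin.last n))
    (hz : z ∉ closure (Y (Fin.last n) : Set X))
    (hY : ∀ k : Fin n, ¬ (Y k.succ : Set X) ⊆ closure (Y k.castSucc : Set X))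
    (hanti : StrictAnti d) : HasLethargyElement Y d z := by
  refine .of_exists_norm_sub_le hmono hd hz hY fun k x hx ↦ ?_
  obtain ⟨y, hy, hxy⟩ :=
    exists_mem_norm_sub_lt_of_infDist_lt (hx.trans_lt (hanti k.castSucc_lt_succ))
  exact ⟨y, hy, hxy.le⟩

theorem HasLethargyElement.of_isExistenceSubspace (hmono : StrictMono Y)
    (hd : 0 ≤ d (Fin.last n)) (hz : z ∉ closure (Y (Fin.last n) : Set X))
    (hY : ∀ k, IsExistenceSubspace (Y k)) (hanti : Antitone d) : HasLethargyElement Y d z := by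
  refine .of_exists_norm_sub_le hmono.monotone hd hz (fun k hk ↦ ?_) fun k x hx ↦ ?_
  · rw [(hY k.castSucc).isClosed.closure_eq] at hk
    exact (hmono k.castSucc_lt_succ).not_ge hk
  · obtain ⟨y, hy, hxy⟩ := hY k.succ x
    exact ⟨y, hy, (hxy.trans hx).trans_le (hanti k.castSucc_lt_succ.le)⟩

end Lethargy

theorem stmt_3 {𝕜 X : Type*} [RCLike 𝕜] [NormedAddCommGroup X] [NormedSpace 𝕜 X]
    (n : ℕ) (Y : Fin (n + 1) → Submodule 𝕜 X)
    (hnested : ∀ k : Fin n, Y k.castSucc < Y k.succ)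
    (d : Fin (n + 1) → ℝ) (hd0 : 0 ≤ d (Fin.last n))
    (z : X) (hz : z ∉ closure (Y (Fin.last n) : Set X)) :
    ((∀ k : Fin n, ¬ (Y k.succ : Set X) ⊆ closure (Y k.castSucc : Set X)) →
        StrictAnti d → HasLethargyElement Y d z) ∧
      ((∀ k, IsExistenceSubspace (Y k)) → Antitone d → HasLethargyElement Y d z) ∧
      ((∀ k, FiniteDimensional 𝕜 (Y k)) → Antitone d → HasLethargyElement Y d z) ∧
      (IsReflexiveSpace 𝕜 X → (∀ k, IsClosed (Y k : Set X)) → Antitone d →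
        HasLethargyElement Y d z) := by
  have hmono : StrictMono Y := Fin.strictMono_iff_lt_succ.2 hnested
  refine ⟨.of_strictAnti hmono.monotone hd0 hz, .of_isExistenceSubspace hmono hd0 hz,
    fun hfin ↦ .of_isExistenceSubspace hmono hd0 hz fun k ↦ ?_,
    fun hX hclosed ↦ .of_isExistenceSubspace hmono hd0 hz fun k ↦
      hX.isExistenceSubspace (hclosed k)⟩
  have := hfin k
  have := FiniteDimensional.proper_rclike 𝕜 (Y k)
  exact .of_properSpace (Y k)
end

section
/- Let $X$ be a real or complex Banach space. By a nested system in $X$ we mean a strictly increasing sequence $Y_1\subsetneq Y_2\subsetneq\cdots$ of closed subspaces of $X$ whose union $\bigcup_n Y_n$ is dense in $X$. If $X$ is infinite-dimensional, assume that $X$ possesses at least one nested system (this is automatic, for instance, if $X$ is separable). Suppose that $X$ satisfies the property (B): for every nested system $(Y_n)$ in $X$ and for every non-increasing sequence $(d_n)$ of non-negative real numbers converging to $0$, there exists $x\in X$ such that $\rho(x,Y_n)=d_n$ for all $n$, where $\rho(x,Y):=\inf\{\|x-y\|:y\in Y\}$. Then $X$ is reflexive, i.e. the canonical embedding of $X$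 into its double dual $X^{**}$ is surjective. -/
open Filter Metric

/-- A strictly increasing sequence of closed subspaces of `X` whose union is dense in `X`. -/
structure IsNestedSystem (𝕜 : Type*) {X : Type*} [RCLike 𝕜] [NormedAddCommGroup X]
    [NormedSpace 𝕜 X] (Y : ℕ → Submodule 𝕜 X) : Prop where
  isClosed : ∀ n, IsClosed (Y n : Set X)
  lt_succ : ∀ n, Y n < Y (n + 1)
  dense_iUnion : Dense (⋃ n, (Y n : Set X))

/-- Property (B): for every strictly increasing sequence of closed subspaces with dense union, every
non-increasing null sequence of non-negative reals is the sequence of distances of some `x`. -/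
def PropertyB (𝕜 X : Type*) [RCLike 𝕜] [NormedAddCommGroup X] [NormedSpace 𝕜 X] : Prop :=
  ∀ Y : ℕ → Submodule 𝕜 X, IsNestedSystem 𝕜 Y →
    ∀ d : ℕ → ℝ, Antitone d → (∀ n, 0 ≤ d n) → Tendsto d atTop (nhds 0) →
      ∃ x : X, ∀ n, infDist x (Y n : Set X) = d n

/-!
If `C` lies strictly below a nested system and `u` is a nonzero functional on `C` with nonzero
kernel, then property (B) for `⊥ < ker u < C < ⋯` and the distances `1, 1, 0, 0, …` gives `z ∈ C`
with `‖z‖ = 1 = ρ(z, ker u)`, so `u` attains its norm at `z`. On the other hand, the closed span of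
the vectors of a James sequence carries, by James' convexity argument, a nonzero functional that
does not attain its norm. Hence the vectors of a James sequence never all lie in the first member
of a nested system. Every member of a nested system is therefore reflexive, since otherwise it
would contain a James sequence.

Suppose now that `X` is not reflexive and let `Z` be a nested system. Reflexivity of the `Z n`
allows a James sequence `x, f` in `X` with `f n = 0` on `Z n`. The span of the `x (2 * k)` and of
`Z n` is annihilated by `f (2 * n + 1) - f (2 * n + 2)`, so it is not dense; as `n` grows, the
closures of these spans yield a nested system whose first member contains the James sequence
`x (2 * k)`, a contradiction.
-/

section FiniteDimensional

variable (𝕜 E : Type*) [RCLike 𝕜] [NormedAddCommGroup E] [NormedSpace 𝕜 E]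
  [FiniteDimensional 𝕜 E]

theorem finrank_strongDual : Module.finrank 𝕜 (StrongDual 𝕜 E) = Module.finrank 𝕜 E :=
  (LinearMap.toContinuousLinearMap (𝕜 := 𝕜) (E := E) (F' := 𝕜)).finrank_eq.symm.trans
    Subspace.dual_finrank_eq

theorem surjective_inclusionInDoubleDual_of_finiteDimensional :
    Function.Surjective (NormedSpace.inclusionInDoubleDual 𝕜 E) :=
  ((NormedSpace.inclusionInDoubleDualLi (E := E) 𝕜).toLinearIsometryEquiv
    ((finrank_strongDual 𝕜 (StrongDual 𝕜 E)).trans (finrank_strongDual 𝕜 E)).symm).surjective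

end FiniteDimensional

section Duality

variable {𝕜 X : Type*} [RCLike 𝕜]

theorem norm_precomp_mkQL_le_one [SeminormedAddCommGroup X] [NormedSpace 𝕜 X]
    (N : Submodule 𝕜 X) :
    ‖(ContinuousLinearMap.precomp 𝕜 N.mkQL : StrongDual 𝕜 (X ⧸ N) →L[𝕜] StrongDual 𝕜 X)‖ ≤ 1 :=
  ContinuousLinearMap.opNorm_le_bound _ zero_le_one fun h =>
    ContinuousLinearMap.opNorm_le_bound _ (by positivity) fun x => by
      rw [one_mul]
      exact h.le_opNorm_of_le (Submodule.Quotient.norm_mk_le N x)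

theorem exists_norm_lt_one_notMem_range_inclusionInDoubleDual [SeminormedAddCommGroup X]
    [NormedSpace 𝕜 X] (hX : ¬ Function.Surjective (NormedSpace.inclusionInDoubleDual 𝕜 X)) :
    ∃ φ : StrongDual 𝕜 (StrongDual 𝕜 X),
      ‖φ‖ < 1 ∧ φ ∉ (NormedSpace.inclusionInDoubleDual 𝕜 X).range := by
  by_contra! hball
  exact hX (LinearMap.range_eq_top.1 (Submodule.eq_top_of_nonempty_interior' _
    ⟨0, mem_interior_iff_mem_nhds.2 (mem_of_superset (ball_mem_nhds 0 one_pos) fun φ hφ =>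
      hball φ (mem_ball_zero_iff.1 hφ))⟩))

/-- **Helly's theorem** on finitely many functionals. -/
theorem exists_norm_lt_forall_apply_eq {ι : Type*} [Finite ι] [SeminormedAddCommGroup X]
    [NormedSpace 𝕜 X] {φ : StrongDual 𝕜 (StrongDual 𝕜 X)} {r : ℝ} (hφ : ‖φ‖ < r)
    (g : ι → StrongDual 𝕜 X) : ∃ x : X, ‖x‖ < r ∧ ∀ i, g i x = φ (g i) := by
  have := Fintype.ofFinite ι
  let T : X →L[𝕜] (ι → 𝕜) := ContinuousLinearMap.pi g
  let N : Submodule 𝕜 X := T.toLinearMap.ker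
  have : IsClosed (N : Set X) := T.isClosed_ker
  have : FiniteDimensional 𝕜 (X ⧸ N) := T.toLinearMap.quotKerEquivRange.symm.finiteDimensional
  have hN (i : ι) : N ≤ (g i).ker := fun x hx => congrFun (show T x = 0 from hx) i
  obtain ⟨q, hq⟩ := surjective_inclusionInDoubleDual_of_finiteDimensional 𝕜 (X ⧸ N)
    (φ.comp (ContinuousLinearMap.precomp 𝕜 N.mkQL))
  have hqr : ‖q‖ < r := calc
    ‖q‖ = ‖NormedSpace.inclusionInDoubleDual 𝕜 (X ⧸ N) q‖ :=
      ((NormedSpace.inclusionInDoubleDualLi (E := X ⧸ N) 𝕜).norm_map q).symm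
    _ ≤ ‖φ‖ * ‖(ContinuousLinearMap.precomp 𝕜 N.mkQL :
        StrongDual 𝕜 (X ⧸ N) →L[𝕜] StrongDual 𝕜 X)‖ := hq ▸ φ.opNorm_comp_le _
    _ ≤ ‖φ‖ := mul_le_of_le_one_right (norm_nonneg φ) (norm_precomp_mkQL_le_one N)
    _ < r := hφ
  obtain ⟨x, rfl, hx⟩ := Submodule.Quotient.norm_mk_lt q (sub_pos.2 hqr)
  exact ⟨x, by linarith, fun i => congrArg (fun Ψ => Ψ (N.liftQL (g i) (hN i))) hq⟩

variable [NormedAddCommGroup X] [NormedSpace 𝕜 X]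

theorem bipolar_le_range_inclusionInDoubleDual {Z : Submodule 𝕜 X}
    (hZ : Function.Surjective (NormedSpace.inclusionInDoubleDual 𝕜 Z)) :
    StrongDual.polarSubmodule 𝕜 (StrongDual.polarSubmodule 𝕜 Z) ≤
      (NormedSpace.inclusionInDoubleDual 𝕜 X).range := by
  intro Ψ hΨ
  rw [StrongDual.mem_polarSubmodule] at hΨ
  let restrict : StrongDual 𝕜 X →ₗ[𝕜] StrongDual 𝕜 Z :=
    (ContinuousLinearMap.precomp 𝕜 Z.subtypeL).toLinearMap
  obtain ⟨χ, hχ⟩ : Ψ.toLinearMap ∈ restrict.dualMap.range := by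
    rw [LinearMap.range_dualMap_eq_dualAnnihilator_ker, Submodule.mem_dualAnnihilator]
    exact fun f hf => hΨ f ((StrongDual.mem_polarSubmodule 𝕜 Z f).2 fun z hz =>
      DFunLike.congr_fun hf (⟨z, hz⟩ : Z))
  have hχ_apply (f : StrongDual 𝕜 X) : χ (f.comp Z.subtypeL) = Ψ f := DFunLike.congr_fun hχ f
  have hχ_bound (f : StrongDual 𝕜 Z) : ‖χ f‖ ≤ ‖Ψ‖ * ‖f‖ := by
    obtain ⟨g, hgf, hg⟩ := exists_extension_norm_eq Z f
    rw [← hg, ← show g.comp Z.subtypeL = f from ContinuousLinearMap.ext hgf, hχ_apply]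
    exact Ψ.le_opNorm g
  obtain ⟨z, hz⟩ := hZ (χ.mkContinuous ‖Ψ‖ hχ_bound)
  refine ⟨z, ContinuousLinearMap.ext fun f => ?_⟩
  rw [← hχ_apply]
  exact DFunLike.congr_fun hz (f.comp Z.subtypeL)

theorem exists_mem_span_sub_mem_polar {D : Submodule 𝕜 X} {s : Set (StrongDual 𝕜 X)}
    (hs : s.Finite) {Ψ : StrongDual 𝕜 X} (hΨ : ∀ f ∈ D, (∀ g ∈ s, g f = 0) → Ψ f = 0) :
    ∃ g ∈ Submodule.span 𝕜 s, Ψ - g ∈ StrongDual.polarSubmodule 𝕜 D := by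
  have := hs.to_subtype
  let restrict : StrongDual 𝕜 X →ₗ[𝕜] D →ₗ[𝕜] 𝕜 :=
    LinearMap.lcomp 𝕜 𝕜 D.subtype ∘ₗ ContinuousLinearMap.coeLM 𝕜
  have hker : ⨅ g : s, (restrict g).ker ≤ (restrict Ψ).ker := fun f hf => by
    rw [Submodule.mem_iInf] at hf
    exact hΨ f f.2 fun g hg => hf ⟨g, hg⟩
  have hspan := mem_span_of_iInf_ker_le_ker hker
  rw [Set.range_comp' restrict, ← Submodule.map_span, Subtype.range_coe] at hspan
  obtain ⟨g, hg, hgΨ⟩ := hspan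
  exact ⟨g, hg, (StrongDual.mem_polarSubmodule 𝕜 D _).2 fun f hf =>
    sub_eq_zero.2 (DFunLike.congr_fun hgΨ ⟨f, hf⟩).symm⟩

theorem bipolar_sup_span_le_range_inclusionInDoubleDual {Z : Submodule 𝕜 X}
    (hZ : StrongDual.polarSubmodule 𝕜 (StrongDual.polarSubmodule 𝕜 Z) ≤
      (NormedSpace.inclusionInDoubleDual 𝕜 X).range) {s : Set X} (hs : s.Finite) :
    StrongDual.polarSubmodule 𝕜 (StrongDual.polarSubmodule 𝕜 (Z ⊔ Submodule.span 𝕜 s)) ≤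
      (NormedSpace.inclusionInDoubleDual 𝕜 X).range := by
  intro Ψ hΨ
  rw [StrongDual.mem_polarSubmodule] at hΨ
  obtain ⟨g, hg, hgΨ⟩ := exists_mem_span_sub_mem_polar (Ψ := Ψ)
    (hs.image (NormedSpace.inclusionInDoubleDual 𝕜 X)) fun f hf hfs => by
      have hle : Z ⊔ Submodule.span 𝕜 s ≤ f.ker :=
        sup_le ((StrongDual.mem_polarSubmodule 𝕜 Z f).1 hf)
          (Submodule.span_le.2 fun x hx => hfs _ (Set.mem_image_of_mem _ hx))
      exact hΨ f ((StrongDual.mem_polarSubmodule 𝕜 _ f).2 hle)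
  have hg_range : g ∈ (NormedSpace.inclusionInDoubleDual 𝕜 X).range :=
    Submodule.span_le.2 (Set.image_subset_range _ s) hg
  exact (Submodule.sub_mem_iff_left _ hg_range).1 (hZ hgΨ)

theorem exists_mem_norm_lt_one_apply_eq {D : Submodule 𝕜 X} {R : Set (StrongDual 𝕜 X)}
    (hDR : (StrongDual.polarSubmodule 𝕜 D : Set (StrongDual 𝕜 X)) ⊆ R) {G : StrongDual 𝕜 X}
    {θ : ℝ} (hθ : 0 ≤ θ) (hG : θ < infDist G R) : ∃ f ∈ D, ‖f‖ < 1 ∧ G f = (θ : 𝕜) := by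
  obtain ⟨H, hHG, hH⟩ := exists_extension_norm_eq D (G.comp D.subtypeL)
  have hmem : G - H ∈ R :=
    hDR ((StrongDual.mem_polarSubmodule 𝕜 D _).2 fun f hf => sub_eq_zero.2 (hHG ⟨f, hf⟩).symm)
  have hθG : θ < ‖G.comp D.subtypeL‖ := calc
    θ < infDist G R := hG
    _ ≤ dist G (G - H) := infDist_le_dist_of_mem hmem
    _ = ‖G.comp D.subtypeL‖ := by rw [dist_eq_norm, sub_sub_cancel, hH]
  obtain ⟨f, hf, hθf⟩ := ContinuousLinearMap.exists_lt_apply_of_lt_opNorm _ hθG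
  change θ < ‖G f‖ at hθf
  have hGf : 0 < ‖G f‖ := hθ.trans_lt hθf
  refine ⟨((θ : 𝕜) / G f) • (f : X), D.smul_mem _ f.2, ?_, ?_⟩
  · rw [norm_smul, norm_div, RCLike.norm_ofReal, abs_of_nonneg hθ]
    exact mul_lt_one_of_nonneg_of_lt_one_right ((div_le_one hGf).2 hθf.le) (norm_nonneg _) hf
  · rw [map_smul, smul_eq_mul, div_mul_cancel₀ _ (norm_pos_iff.1 hGf)]

end Duality

/-- A pair of sequences in the unit balls of `X` and of its dual, triangular in the sense that
`f n (x k)` is a fixed `θ > 0` for `n ≤ k` and `0` for `k < n`. By James, a Banach space is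
non-reflexive if and only if it contains such sequences. -/
structure IsJamesSequence {𝕜 X : Type*} [RCLike 𝕜] [NormedAddCommGroup X] [NormedSpace 𝕜 X]
    (θ : ℝ) (x : ℕ → X) (f : ℕ → StrongDual 𝕜 X) : Prop where
  pos : 0 < θ
  norm_vector_le : ∀ n, ‖x n‖ ≤ 1
  norm_functional_le : ∀ n, ‖f n‖ ≤ 1
  apply_of_le : ∀ {n k}, n ≤ k → f n (x k) = (θ : 𝕜)
  apply_of_lt : ∀ {n k}, k < n → f n (x k) = 0

section ExistsJamesSequence

variable {𝕜 X : Type*} [RCLike 𝕜] [NormedAddCommGroup X] [NormedSpace 𝕜 X]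

theorem exists_isJamesSequence_of_forall_finset {G : StrongDual 𝕜 X → 𝕜} {θ : ℝ} (hθ : 0 < θ)
    {D : ℕ → Set (StrongDual 𝕜 X)} (hD : Antitone D)
    (hf : ∀ n (s : Finset X), ∃ f ∈ D n, ‖f‖ ≤ 1 ∧ G f = (θ : 𝕜) ∧ ∀ x ∈ s, f x = 0)
    (hx : ∀ s : Finset (StrongDual 𝕜 X), ∃ x : X, ‖x‖ ≤ 1 ∧ ∀ f ∈ s, f x = G f) :
    ∃ (x : ℕ → X) (f : ℕ → StrongDual 𝕜 X), IsJamesSequence θ x f ∧ ∀ n, f n ∈ D n := by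
  classical
  obtain ⟨u, hu, hlt⟩ := exists_seq_of_forall_finset_exists
    (fun p : ℕ × StrongDual 𝕜 X × X => p.2.1 ∈ D p.1 ∧ ‖p.2.1‖ ≤ 1 ∧ ‖p.2.2‖ ≤ 1 ∧
      G p.2.1 = (θ : 𝕜) ∧ p.2.1 p.2.2 = (θ : 𝕜))
    (fun p q => p.1 < q.1 ∧ q.2.1 p.2.2 = 0 ∧ p.2.1 q.2.2 = (θ : 𝕜)) fun s hs => by
      obtain ⟨f, hfD, hf1, hfG, hfs⟩ := hf (s.sup Prod.fst + 1) (s.image (·.2.2))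
      obtain ⟨x, hx1, hxG⟩ := hx (insert f (s.image (·.2.1)))
      refine ⟨(s.sup Prod.fst + 1, f, x), ⟨hfD, hf1, hx1, hfG, ?_⟩, fun p hp => ⟨?_, ?_, ?_⟩⟩
      · exact (hxG f (Finset.mem_insert_self _ _)).trans hfG
      · exact Nat.lt_succ_of_le (Finset.le_sup (f := Prod.fst) hp)
      · exact hfs _ (Finset.mem_image_of_mem _ hp)
      · obtain ⟨-, -, -, hpG, -⟩ := hs p hp
        exact (hxG _ (Finset.mem_insert_of_mem (Finset.mem_image_of_mem _ hp))).trans hpG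
  choose hmem hnorm_f hnorm_x _ hdiag using hu
  have hindex : StrictMono fun n => (u n).1 := fun m n hmn => (hlt m n hmn).1
  refine ⟨fun n => (u n).2.2, fun n => (u n).2.1, ⟨hθ, hnorm_x, hnorm_f, fun {n k} hnk => ?_,
    fun {n k} hkn => (hlt k n hkn).2.1⟩, fun n => hD hindex.le_apply (hmem n)⟩
  rcases hnk.eq_or_lt with rfl | hnk
  · exact hdiag n
  · exact (hlt n k hnk).2.2

theorem exists_isJamesSequence_mem_polar [CompleteSpace X]
    (hX : ¬ Function.Surjective (NormedSpace.inclusionInDoubleDual 𝕜 X))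
    {Z : ℕ → Submodule 𝕜 X} (hZ : Monotone Z)
    (hrefl : ∀ n, Function.Surjective (NormedSpace.inclusionInDoubleDual 𝕜 (Z n))) :
    ∃ (θ : ℝ) (x : ℕ → X) (f : ℕ → StrongDual 𝕜 X), IsJamesSequence θ x f ∧
      ∀ n, f n ∈ StrongDual.polarSubmodule 𝕜 (Z n) := by
  let J := NormedSpace.inclusionInDoubleDual 𝕜 X
  have hclosed : IsClosed (Set.range J) :=
    (NormedSpace.inclusionInDoubleDualLi (E := X) 𝕜).isometry.isUniformInducing
      |>.isComplete_range.isClosed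
  obtain ⟨G, hG1, hGJ⟩ := exists_norm_lt_one_notMem_range_inclusionInDoubleDual hX
  have hdist : 0 < infDist G (Set.range J) :=
    (hclosed.notMem_iff_infDist_pos (Set.range_nonempty J)).1 hGJ
  obtain ⟨θ, hθ, hθG⟩ := exists_between hdist
  obtain ⟨x, f, hxf⟩ := exists_isJamesSequence_of_forall_finset (G := G) hθ
    (D := fun n => StrongDual.polarSubmodule 𝕜 (Z n))
    (fun m n hmn f hf => (StrongDual.mem_polarSubmodule 𝕜 (Z m) f).2 fun z hz =>
      (StrongDual.mem_polarSubmodule 𝕜 (Z n) f).1 hf z (hZ hmn hz))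
    (fun n s => by
      obtain ⟨f, hf, hf1, hfG⟩ := exists_mem_norm_lt_one_apply_eq
        (bipolar_sup_span_le_range_inclusionInDoubleDual
          (bipolar_le_range_inclusionInDoubleDual (hrefl n)) s.finite_toSet) hθ.le hθG
      rw [StrongDual.mem_polarSubmodule] at hf
      exact ⟨f, (StrongDual.mem_polarSubmodule 𝕜 (Z n) f).2 fun z hz =>
          hf z (Submodule.mem_sup_left hz), hf1.le, hfG,
        fun x hx => hf x (Submodule.mem_sup_right (Submodule.subset_span hx))⟩)
    (fun s => by
      obtain ⟨x, hx1, hx⟩ := exists_norm_lt_forall_apply_eq hG1 fun f : s => (f : StrongDual 𝕜 X)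
      exact ⟨x, hx1.le, fun f hf => hx ⟨f, hf⟩⟩)
  exact ⟨θ, x, f, hxf⟩

end ExistsJamesSequence


section DyadicSum

variable {E : Type*} [NormedAddCommGroup E] [NormedSpace ℝ E] {γ : ℕ → E} {K : ℕ → Set E}

/-- The partial sum `∑ k < n, 2 ^ -(k + 1) • γ k` of an infinite convex combination; the weights
still to be distributed add up to `2 ^ -n`. -/
noncomputable def dyadicSum (γ : ℕ → E) (n : ℕ) : E :=
  ∑ k ∈ Finset.range n, ((1 / 2 : ℝ) ^ (k + 1)) • γ k

/-- The convex combinations that start with `dyadicSum γ n` and spend the remaining weight `2 ^ -n`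
on one element of `s`. -/
def dyadicExtensions (γ : ℕ → E) (s : Set E) (n : ℕ) : Set E :=
  (fun g => dyadicSum γ n + ((1 / 2 : ℝ) ^ n) • g) '' s

theorem dyadicSum_zero (γ : ℕ → E) : dyadicSum γ 0 = 0 := Finset.sum_range_zero _

theorem dyadicSum_succ (γ : ℕ → E) (n : ℕ) :
    dyadicSum γ (n + 1) = dyadicSum γ n + ((1 / 2 : ℝ) ^ (n + 1)) • γ n :=
  Finset.sum_range_succ _ n

theorem antitone_dyadicExtensions (hK : Antitone K) (hconv : ∀ n, Convex ℝ (K n))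
    (hγ : ∀ n, γ n ∈ K n) : Antitone fun n => dyadicExtensions γ (K n) n := by
  refine antitone_nat_of_succ_le fun n => ?_
  rintro _ ⟨g, hg, rfl⟩
  refine ⟨(1 / 2 : ℝ) • γ n + (1 / 2 : ℝ) • g, hconv n (hγ n) (hK n.le_succ hg) (by norm_num)
    (by norm_num) (by norm_num), ?_⟩
  simp only [dyadicSum_succ, smul_add, smul_smul, pow_succ, add_assoc]

theorem tendsto_two_inv_pow_smul {c : ℝ} (hγ : ∀ n, ‖γ n‖ ≤ c) :
    Tendsto (fun n => ((1 / 2 : ℝ) ^ n) • γ n) atTop (nhds 0) :=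
  NormedField.tendsto_zero_smul_of_tendsto_zero_of_bounded
    (tendsto_pow_atTop_nhds_zero_of_lt_one (by norm_num) (by norm_num))
    (isBoundedUnder_of ⟨c, hγ⟩)

theorem exists_tendsto_dyadicSum [CompleteSpace E] {c : ℝ} (hγ : ∀ n, ‖γ n‖ ≤ c) :
    ∃ u, Tendsto (dyadicSum γ) atTop (nhds u) := by
  refine ⟨_, (Summable.of_norm_bounded (g := fun n => c / 2 / 2 ^ n) (summable_geometric_two' c)
    fun n => ?_).hasSum.tendsto_sum_nat⟩
  rw [norm_smul, norm_pow, Real.norm_of_nonneg (by norm_num : (0 : ℝ) ≤ 1 / 2), pow_succ]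
  calc (1 / 2 : ℝ) ^ n * (1 / 2) * ‖γ n‖ ≤ (1 / 2) ^ n * (1 / 2) * c := by gcongr; exact hγ n
    _ = c / 2 / 2 ^ n := by rw [one_div_pow]; ring

theorem mem_closure_dyadicExtensions (hK : Antitone K) (hconv : ∀ n, Convex ℝ (K n))
    (hγ : ∀ n, γ n ∈ K n) {c : ℝ} (hγc : ∀ n, ‖γ n‖ ≤ c) {u : E}
    (hu : Tendsto (dyadicSum γ) atTop (nhds u)) (n : ℕ) :
    u ∈ closure (dyadicExtensions γ (K n) n) := by
  have htendsto := hu.add (tendsto_two_inv_pow_smul hγc)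
  rw [add_zero] at htendsto
  exact mem_closure_of_tendsto htendsto ((eventually_ge_atTop n).mono fun m hnm =>
    antitone_dyadicExtensions hK hconv hγ hnm (Set.mem_image_of_mem _ (hγ m)))

theorem exists_norm_add_smul_le_add {s : Set E} (hs : s.Nonempty) (q : E) (a : ℝ) {ε : ℝ}
    (hε : 0 < ε) : ∃ g ∈ s, ∀ g' ∈ s, ‖q + a • g‖ ≤ ‖q + a • g'‖ + ε := by
  have hbdd : BddBelow ((fun g => ‖q + a • g‖) '' s) :=
    ⟨0, Set.forall_mem_image.2 fun g _ => norm_nonneg _⟩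
  obtain ⟨_, ⟨g, hg, rfl⟩, hlt⟩ := Real.lt_sInf_add_pos (hs.image fun g => ‖q + a • g‖) hε
  refine ⟨g, hg, fun g' hg' => hlt.le.trans ?_⟩
  gcongr
  exact csInf_le hbdd (Set.mem_image_of_mem _ hg')

theorem exists_dyadicSum_almost_minimal (hne : ∀ n, (K n).Nonempty) {ε : ℕ → ℝ}
    (hε : ∀ n, 0 < ε n) :
    ∃ γ : ℕ → E, (∀ n, γ n ∈ K n) ∧ ∀ n, ∀ v ∈ dyadicExtensions γ (K n) n,
      ‖dyadicSum γ n + ((1 / 2 : ℝ) ^ n) • γ n‖ ≤ ‖v‖ + ε n := by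
  choose next hnext hmin using fun n q =>
    exists_norm_add_smul_le_add (hne n) q ((1 / 2 : ℝ) ^ n) (hε n)
  let p : ℕ → E := fun n => Nat.rec 0 (fun n q => q + ((1 / 2 : ℝ) ^ (n + 1)) • next n q) n
  have hp (n : ℕ) : dyadicSum (fun k => next k (p k)) n = p n := by
    induction n with
    | zero => exact dyadicSum_zero _
    | succ n ih => rw [dyadicSum_succ, ih]
  refine ⟨fun n => next n (p n), fun n => hnext n (p n), fun n => ?_⟩
  rw [dyadicExtensions, hp, Set.forall_mem_image]
  exact hmin n (p n)

theorem norm_dyadicSum_le {c : ℝ}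
    (hγ : ∀ n, ‖dyadicSum γ n + ((1 / 2 : ℝ) ^ n) • γ n‖ ≤ c + c * ((1 / 4) ^ n / 4)) (n : ℕ) :
    ‖dyadicSum γ n‖ ≤ c * (1 - (1 / 2) ^ n / 2 - (1 / 4) ^ n / 2) := by
  induction n with
  | zero => norm_num [dyadicSum_zero]
  | succ n ih =>
    have hmidpoint : dyadicSum γ (n + 1) =
        (1 / 2 : ℝ) • (dyadicSum γ n + (dyadicSum γ n + ((1 / 2 : ℝ) ^ n) • γ n)) := by
      rw [dyadicSum_succ]
      module
    calc ‖dyadicSum γ (n + 1)‖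
        ≤ 1 / 2 * (‖dyadicSum γ n‖ + ‖dyadicSum γ n + ((1 / 2 : ℝ) ^ n) • γ n‖) := by
          rw [hmidpoint, norm_smul, Real.norm_of_nonneg (by norm_num)]
          gcongr
          exact norm_add_le _ _
      _ ≤ 1 / 2 * (c * (1 - (1 / 2) ^ n / 2 - (1 / 4) ^ n / 2) + (c + c * ((1 / 4) ^ n / 4))) := by
          gcongr
          exact hγ n
      _ = c * (1 - (1 / 2) ^ (n + 1) / 2 - (1 / 4) ^ (n + 1) / 2) := by ring

/-- James' convexity argument: each `γ n` is chosen to almost minimize the norm on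
`dyadicExtensions γ (K n) n`, so that the limit `u` is almost minimal there for every `n` at once,
while `dyadicSum γ (n + 1)` is the midpoint of `dyadicSum γ n` and an almost minimal element. -/
theorem exists_dyadicSum_norm_lt [CompleteSpace E] (hK : Antitone K)
    (hconv : ∀ n, Convex ℝ (K n)) (hne : ∀ n, (K n).Nonempty) {c : ℝ} (hle : ∀ g ∈ K 0, ‖g‖ ≤ c)
    {θ : ℝ} (hθ : 0 < θ) (hge : ∀ g ∈ K 0, θ ≤ ‖g‖) :
    ∃ (u : E) (γ : ℕ → E), u ≠ 0 ∧ (∀ n, ‖dyadicSum γ n‖ < ‖u‖ * (1 - (1 / 2) ^ n / 2)) ∧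
      ∀ n, u ∈ closure (dyadicExtensions γ (K n) n) := by
  obtain ⟨γ, hγK, hγmin⟩ := exists_dyadicSum_almost_minimal hne
    (ε := fun n => θ * ((1 / 4) ^ n / 4)) fun n => by positivity
  have hγc (n : ℕ) : ‖γ n‖ ≤ c := hle _ (hK n.zero_le (hγK n))
  obtain ⟨u, hu⟩ := exists_tendsto_dyadicSum hγc
  have hmem := mem_closure_dyadicExtensions hK hconv hγK hγc hu
  have hθu : θ ≤ ‖u‖ := by
    refine closure_minimal (t := {v | θ ≤ ‖v‖}) ?_ (isClosed_le (by fun_prop) (by fun_prop))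
      (hmem 0)
    rintro _ ⟨g, hg, rfl⟩
    simpa [dyadicSum_zero] using hge g hg
  have hminimal (n : ℕ) :
      ‖dyadicSum γ n + ((1 / 2 : ℝ) ^ n) • γ n‖ ≤ ‖u‖ + ‖u‖ * ((1 / 4) ^ n / 4) := by
    refine le_trans ?_ (add_le_add_right (mul_le_mul_of_nonneg_right hθu (by positivity)) ‖u‖)
    exact closure_minimal (t := {v | _ ≤ ‖v‖ + θ * ((1 / 4) ^ n / 4)}) (hγmin n)
      (isClosed_le (by fun_prop) (by fun_prop)) (hmem n)
  have hu0 : 0 < ‖u‖ := hθ.trans_le hθu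
  refine ⟨u, γ, norm_pos_iff.1 hu0, fun n => (norm_dyadicSum_le hminimal n).trans_lt ?_, hmem⟩
  exact mul_lt_mul_of_pos_left (sub_lt_self _ (by positivity)) hu0

end DyadicSum

section AttainsNorm

variable {𝕜 X : Type*} [RCLike 𝕜] [NormedAddCommGroup X] [NormedSpace 𝕜 X]

/-- The functional `u` attains its norm at a nonzero vector. -/
def AttainsNorm (u : StrongDual 𝕜 X) : Prop := ∃ z, z ≠ 0 ∧ ‖u z‖ = ‖u‖ * ‖z‖

theorem norm_mul_infDist_ker_le (u : StrongDual 𝕜 X) (z : X) :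
    ‖u‖ * infDist z u.ker ≤ ‖u z‖ := by
  rcases (infDist_nonneg (x := z) (s := u.ker)).eq_or_lt with hdist | hdist
  · rw [← hdist, mul_zero]
    exact norm_nonneg _
  rw [← le_div_iff₀ hdist]
  refine u.opNorm_le_bound (by positivity) fun y => ?_
  rw [div_mul_eq_mul_div, le_div_iff₀ hdist]
  rcases eq_or_ne (u y) 0 with hy | hy
  · rw [hy, norm_zero, zero_mul]
    positivity
  have hmem : z - (u z / u y) • y ∈ u.ker := by
    rw [LinearMap.mem_ker, map_sub, map_smul, smul_eq_mul]
    exact sub_eq_zero.2 (div_mul_cancel₀ _ hy).symm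
  have hle := infDist_le_dist_of_mem (x := z) hmem
  rw [dist_eq_norm, sub_sub_cancel, norm_smul, norm_div, div_mul_eq_mul_div,
    le_div_iff₀ (norm_pos_iff.2 hy)] at hle
  rwa [mul_comm ‖u y‖]

theorem attainsNorm_of_infDist_ker_eq_norm {u : StrongDual 𝕜 X} {z : X} (hz : z ≠ 0)
    (hdist : infDist z u.ker = ‖z‖) : AttainsNorm u :=
  ⟨z, hz, (u.le_opNorm z).antisymm (hdist ▸ norm_mul_infDist_ker_le u z)⟩

end AttainsNorm

namespace IsJamesSequence

variable {𝕜 X : Type*} [RCLike 𝕜] [NormedAddCommGroup X] [NormedSpace 𝕜 X] {θ : ℝ} {x : ℕ → X}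
  {f : ℕ → StrongDual 𝕜 X}

theorem comp_strictMono (h : IsJamesSequence θ x f) {φ : ℕ → ℕ} (hφ : StrictMono φ) :
    IsJamesSequence θ (x ∘ φ) (f ∘ φ) :=
  ⟨h.pos, fun _ => h.norm_vector_le _, fun _ => h.norm_functional_le _,
    fun hnk => h.apply_of_le (hφ.monotone hnk), fun hkn => h.apply_of_lt (hφ hkn)⟩

theorem restrict (h : IsJamesSequence θ x f) {C : Submodule 𝕜 X} (hC : ∀ n, x n ∈ C) :
    IsJamesSequence θ (fun n => (⟨x n, hC n⟩ : C)) fun n => (f n).comp C.subtypeL :=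
  ⟨h.pos, h.norm_vector_le,
    fun n => ((f n).comp C.subtypeL).opNorm_le_bound zero_le_one fun z =>
      (f n).le_of_opNorm_le (h.norm_functional_le n) z,
    h.apply_of_le, h.apply_of_lt⟩

theorem exists_extension {Z : Submodule 𝕜 X} {x : ℕ → Z} {f : ℕ → StrongDual 𝕜 Z}
    (h : IsJamesSequence θ x f) :
    ∃ g : ℕ → StrongDual 𝕜 X, IsJamesSequence θ (fun n => (x n : X)) g := by
  choose g hg hnorm using fun n => exists_extension_norm_eq Z (f n)
  exact ⟨g, h.pos, h.norm_vector_le, fun n => (hnorm n).trans_le (h.norm_functional_le n),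
    fun hnk => (hg _ _).trans (h.apply_of_le hnk), fun hkn => (hg _ _).trans (h.apply_of_lt hkn)⟩

theorem tendsto_apply (h : IsJamesSequence θ x f) {z : X}
    (hz : z ∈ (Submodule.span 𝕜 (Set.range x)).topologicalClosure) :
    Tendsto (fun n => f n z) atTop (nhds 0) := by
  have hlip (n : ℕ) : LipschitzWith 1 (f n) :=
    (f n).lipschitz.weaken (mod_cast h.norm_functional_le n)
  have hclosed : IsClosed {z | Tendsto (fun n => f n z) atTop (nhds 0)} :=
    (LipschitzWith.uniformEquicontinuous _ 1 hlip).equicontinuous.isClosed_setOfPred_tendsto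
      continuous_const
  refine closure_minimal (fun y hy => ?_) hclosed hz
  induction hy using Submodule.span_induction with
  | mem y hy =>
    obtain ⟨k, rfl⟩ := hy
    exact tendsto_const_nhds.congr' ((eventually_gt_atTop k).mono fun n hn =>
      (h.apply_of_lt hn).symm)
  | zero => simpa only [Set.mem_ofPred_eq, map_zero] using tendsto_const_nhds
  | add y z _ _ hy hz => simpa only [Set.mem_ofPred_eq, map_add, add_zero] using hy.add hz
  | smul c y _ hy => simpa only [Set.mem_ofPred_eq, map_smul, smul_zero] using hy.const_smul c

theorem norm_le_one_of_mem_convexHull (h : IsJamesSequence θ x f) {v : StrongDual 𝕜 X}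
    (hv : v ∈ convexHull ℝ (Set.range f)) : ‖v‖ ≤ 1 :=
  mem_closedBall_zero_iff.1 (convexHull_min
    (Set.range_subset_iff.2 fun n => mem_closedBall_zero_iff.2 (h.norm_functional_le n))
    (convex_closedBall 0 1) hv)

theorem le_norm_of_mem_convexHull (h : IsJamesSequence θ x f) {v : StrongDual 𝕜 X}
    (hv : v ∈ convexHull ℝ (Set.range f)) : θ ≤ ‖v‖ := by
  have hsub : convexHull ℝ (Set.range f) ⊆ {v | ∀ᶠ k in atTop, v (x k) = (θ : 𝕜)} := by
    refine convexHull_min ?_ fun v hv w hw a b _ _ hab => ?_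
    · rintro _ ⟨n, rfl⟩
      exact (eventually_ge_atTop n).mono fun k hnk => h.apply_of_le hnk
    · filter_upwards [hv, hw] with k hvk hwk
      rw [add_apply, smul_apply, smul_apply, hvk, hwk, Convex.combo_self hab]
  obtain ⟨k, hk⟩ := (hsub hv).exists
  calc θ = ‖v (x k)‖ := by rw [hk, RCLike.norm_ofReal, abs_of_pos h.pos]
    _ ≤ ‖v‖ := v.unit_le_opNorm _ (h.norm_vector_le k)

end IsJamesSequence

section NormNotAttained

variable {𝕜 X : Type*} [RCLike 𝕜] [NormedAddCommGroup X] [NormedSpace 𝕜 X]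

theorem norm_sub_dyadicSum_apply_le {K : Set (StrongDual 𝕜 X)} {z : X} {ε : ℝ}
    (hK : ∀ v ∈ K, ‖v z‖ ≤ ε) {γ : ℕ → StrongDual 𝕜 X} {n : ℕ} {u : StrongDual 𝕜 X}
    (hu : u ∈ closure (dyadicExtensions γ K n)) :
    ‖u z - dyadicSum γ n z‖ ≤ (1 / 2) ^ n * ε := by
  refine closure_minimal (t := {v : StrongDual 𝕜 X | ‖v z - dyadicSum γ n z‖ ≤ (1 / 2) ^ n * ε})
    ?_ (isClosed_le (by fun_prop) continuous_const) hu
  rintro _ ⟨v, hv, rfl⟩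
  rw [Set.mem_ofPred_eq, add_apply, add_sub_cancel_left, smul_apply, norm_smul,
    Real.norm_of_nonneg (by positivity)]
  gcongr
  exact hK v hv

theorem not_attainsNorm_of_dyadicSum {K : ℕ → Set (StrongDual 𝕜 X)} {γ : ℕ → StrongDual 𝕜 X}
    {u : StrongDual 𝕜 X} (hu0 : u ≠ 0)
    (hγ : ∀ n, ‖dyadicSum γ n‖ < ‖u‖ * (1 - (1 / 2) ^ n / 2))
    (hu : ∀ n, u ∈ closure (dyadicExtensions γ (K n) n))
    (hK : ∀ z, ∀ ε > 0, ∃ n, ∀ v ∈ K n, ‖v z‖ ≤ ε) : ¬ AttainsNorm u := by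
  rintro ⟨z, hz, hattained⟩
  obtain ⟨n, hn⟩ := hK z (‖u‖ * ‖z‖ / 2) (by positivity)
  refine hattained.not_lt ?_
  calc ‖u z‖ ≤ ‖dyadicSum γ n z‖ + ‖u z - dyadicSum γ n z‖ := norm_le_norm_add_norm_sub' _ _
    _ ≤ ‖dyadicSum γ n‖ * ‖z‖ + (1 / 2) ^ n * (‖u‖ * ‖z‖ / 2) :=
      add_le_add ((dyadicSum γ n).le_opNorm z) (norm_sub_dyadicSum_apply_le hn (hu n))
    _ < ‖u‖ * (1 - (1 / 2) ^ n / 2) * ‖z‖ + (1 / 2) ^ n * (‖u‖ * ‖z‖ / 2) := by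
      gcongr
      exact hγ n
    _ = ‖u‖ * ‖z‖ := by ring

theorem exists_forall_mem_convexHull_norm_apply_le {f : ℕ → StrongDual 𝕜 X} {z : X}
    (hf : Tendsto (fun n => f n z) atTop (nhds 0)) {ε : ℝ} (hε : 0 < ε) :
    ∃ n, ∀ v ∈ convexHull ℝ (f '' Set.Ici n), ‖v z‖ ≤ ε := by
  obtain ⟨n, hn⟩ := eventually_atTop.1 (hf.eventually (closedBall_mem_nhds 0 hε))
  have hconv : Convex ℝ {v : StrongDual 𝕜 X | v z ∈ closedBall 0 ε} :=
    (convex_closedBall 0 ε).is_linear_preimage ⟨fun _ _ => rfl, fun _ _ => rfl⟩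
  exact ⟨n, fun v hv => mem_closedBall_zero_iff.1
    (convexHull_min (Set.forall_mem_image.2 hn) hconv hv)⟩

theorem IsJamesSequence.exists_ne_zero_not_attainsNorm {θ : ℝ} {x : ℕ → X}
    {f : ℕ → StrongDual 𝕜 X} (h : IsJamesSequence θ x f)
    (hf : ∀ z, Tendsto (fun n => f n z) atTop (nhds 0)) :
    ∃ u : StrongDual 𝕜 X, u ≠ 0 ∧ ¬ AttainsNorm u := by
  let K : ℕ → Set (StrongDual 𝕜 X) := fun n => convexHull ℝ (f '' Set.Ici n)
  have hK : ∀ v ∈ K 0, v ∈ convexHull ℝ (Set.range f) := fun v hv =>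
    convexHull_mono (Set.image_subset_range f _) hv
  obtain ⟨u, γ, hu0, hγ, hu⟩ := exists_dyadicSum_norm_lt (K := K)
    (fun m n hmn => convexHull_mono (Set.image_mono (Set.Ici_subset_Ici.2 hmn)))
    (fun n => convex_convexHull ℝ _)
    (fun n => ⟨f n, subset_convexHull ℝ _ (Set.mem_image_of_mem f Set.self_mem_Ici)⟩)
    (fun v hv => h.norm_le_one_of_mem_convexHull (hK v hv)) h.pos
    (fun v hv => h.le_norm_of_mem_convexHull (hK v hv))
  exact ⟨u, hu0, not_attainsNorm_of_dyadicSum hu0 hγ hu fun z ε hε =>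
    exists_forall_mem_convexHull_norm_apply_le (hf z) hε⟩

end NormNotAttained

section NestedSystem

variable {𝕜 X : Type*} [RCLike 𝕜] [NormedAddCommGroup X] [NormedSpace 𝕜 X]
  {Y : ℕ → Submodule 𝕜 X}

theorem IsNestedSystem.monotone (hY : IsNestedSystem 𝕜 Y) : Monotone Y :=
  monotone_nat_of_le_succ fun n => (hY.lt_succ n).le

theorem IsNestedSystem.shift (hY : IsNestedSystem 𝕜 Y) (n : ℕ) :
    IsNestedSystem 𝕜 fun k => Y (k + n) where
  isClosed k := hY.isClosed _
  lt_succ k := by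
    rw [Nat.succ_add]
    exact hY.lt_succ _
  dense_iUnion := hY.dense_iUnion.mono (Set.iUnion_mono fun k => hY.monotone (k.le_add_right n))

theorem IsNestedSystem.cons (hY : IsNestedSystem 𝕜 Y) {Z : Submodule 𝕜 X}
    (hZ : IsClosed (Z : Set X)) (hZY : Z < Y 0) : IsNestedSystem 𝕜 fun n => Nat.casesOn n Z Y where
  isClosed
    | 0 => hZ
    | n + 1 => hY.isClosed n
  lt_succ
    | 0 => hZY
    | n + 1 => hY.lt_succ n
  dense_iUnion := hY.dense_iUnion.mono (Set.iUnion_subset fun n =>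
    Set.subset_iUnion_of_subset (n + 1) subset_rfl)

theorem exists_isNestedSystem_of_monotone {W : ℕ → Submodule 𝕜 X} (hmono : Monotone W)
    (hclosed : ∀ n, IsClosed (W n : Set X)) (hne : ∀ n, W n ≠ ⊤)
    (hdense : Dense (⋃ n, (W n : Set X))) : ∃ φ : ℕ → ℕ, IsNestedSystem 𝕜 (W ∘ φ) := by
  have hlt (n : ℕ) : ∃ m, n < m ∧ W n < W m := by
    by_contra! hstable
    have hle (m : ℕ) : W m ≤ W n := by
      rcases le_or_gt m n with hmn | hnm
      · exact hmono hmn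
      · exact ((hmono hnm.le).eq_of_not_lt (hstable m hnm)).ge
    have hWn : Dense (W n : Set X) := hdense.mono (Set.iUnion_subset hle)
    exact hne n ((hclosed n).submodule_topologicalClosure_eq.symm.trans
      (Submodule.dense_iff_topologicalClosure_eq_top.1 hWn))
  choose next hnext hnext_lt using hlt
  have hsucc (n : ℕ) : next^[n + 1] 0 = next (next^[n] 0) := Function.iterate_succ_apply' _ _ _
  have hφ : StrictMono fun n => next^[n] 0 :=
    strictMono_nat_of_lt_succ fun n => (hnext _).trans_eq (hsucc n).symm
  refine ⟨fun n => next^[n] 0, fun n => hclosed _, fun n => ?_, ?_⟩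
  · rw [Function.comp_apply, Function.comp_apply, hsucc]
    exact hnext_lt _
  · exact hdense.mono (Set.iUnion_mono fun n => hmono hφ.le_apply)

theorem topologicalClosure_span_sup_ne_top {θ : ℝ} {x : ℕ → X} {f : ℕ → StrongDual 𝕜 X}
    (h : IsJamesSequence θ x f) {Z : ℕ → Submodule 𝕜 X} (hZ : Monotone Z)
    (hfZ : ∀ n, f n ∈ StrongDual.polarSubmodule 𝕜 (Z n)) (n : ℕ) :
    (Submodule.span 𝕜 (Set.range fun k => x (2 * k)) ⊔ Z n).topologicalClosure ≠ ⊤ := by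
  intro htop
  let g : StrongDual 𝕜 X := f (2 * n + 1) - f (2 * n + 2)
  have hfZn {m : ℕ} (hnm : n ≤ m) {z : X} (hz : z ∈ Z n) : f m z = 0 :=
    (StrongDual.mem_polarSubmodule 𝕜 _ _).1 (hfZ m) z (hZ hnm hz)
  have hgx (k : ℕ) : g (x (2 * k)) = 0 := by
    rcases Nat.lt_or_ge n k with hnk | hkn
    · rw [sub_apply, h.apply_of_le (by lia), h.apply_of_le (by lia), sub_self]
    · rw [sub_apply, h.apply_of_lt (by lia), h.apply_of_lt (by lia), sub_self]
  have hgZ {z : X} (hz : z ∈ Z n) : g z = 0 := by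
    rw [sub_apply, hfZn (by lia) hz, hfZn (by lia) hz, sub_self]
  have hker : Submodule.span 𝕜 (Set.range fun k => x (2 * k)) ⊔ Z n ≤ g.ker :=
    sup_le (Submodule.span_le.2 (Set.range_subset_iff.2 hgx)) fun _ hz => hgZ hz
  have hg0 : g (x (2 * n + 1)) = 0 :=
    Submodule.topologicalClosure_minimal _ hker g.isClosed_ker (htop ▸ Submodule.mem_top)
  rw [sub_apply, h.apply_of_le le_rfl, h.apply_of_lt (by lia), sub_zero] at hg0
  exact h.pos.ne' (RCLike.ofReal_eq_zero.1 hg0)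

theorem IsJamesSequence.exists_isNestedSystem {θ : ℝ} {x : ℕ → X} {f : ℕ → StrongDual 𝕜 X}
    (h : IsJamesSequence θ x f) {Z : ℕ → Submodule 𝕜 X} (hZ : IsNestedSystem 𝕜 Z)
    (hfZ : ∀ n, f n ∈ StrongDual.polarSubmodule 𝕜 (Z n)) :
    ∃ Y : ℕ → Submodule 𝕜 X, IsNestedSystem 𝕜 Y ∧ ∀ k, x (2 * k) ∈ Y 0 := by
  let S : Submodule 𝕜 X := Submodule.span 𝕜 (Set.range fun k => x (2 * k))
  obtain ⟨φ, hφ⟩ := exists_isNestedSystem_of_monotone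
    (W := fun n => (S ⊔ Z n).topologicalClosure)
    (fun m n hmn => Submodule.topologicalClosure_mono (sup_le_sup_left (hZ.monotone hmn) S))
    (fun n => Submodule.isClosed_topologicalClosure _)
    (topologicalClosure_span_sup_ne_top h hZ.monotone hfZ)
    (hZ.dense_iUnion.mono (Set.iUnion_mono fun n =>
      SetLike.coe_subset_coe.2 (le_sup_right.trans (Submodule.le_topologicalClosure (S ⊔ Z n)))))
  exact ⟨_, hφ, fun k => Submodule.le_topologicalClosure _
    (Submodule.mem_sup_left (Submodule.subset_span (Set.mem_range_self k)))⟩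

end NestedSystem

namespace PropertyB

variable {𝕜 X : Type*} [RCLike 𝕜] [NormedAddCommGroup X] [NormedSpace 𝕜 X]
  {Y : ℕ → Submodule 𝕜 X}

theorem exists_norm_eq_one_infDist_eq_one (hB : PropertyB 𝕜 X) (hY : IsNestedSystem 𝕜 Y)
    {N : Submodule 𝕜 X} (hN : IsClosed (N : Set X)) (hN0 : ⊥ < N) (hNY : N < Y 0) :
    ∃ z ∈ Y 0, ‖z‖ = 1 ∧ infDist z (N : Set X) = 1 := by
  let d : ℕ → ℝ := fun n => if n < 2 then 1 else 0
  have hd_antitone : Antitone d := fun m n hmn => by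
    simp only [d]
    split_ifs with hn hm <;> first | lia | norm_num
  have hd_nonneg (n : ℕ) : 0 ≤ d n := by
    simp only [d]
    split_ifs <;> norm_num
  have hd_tendsto : Tendsto d atTop (nhds 0) :=
    tendsto_atTop_of_eventually_const (i₀ := 2) fun n hn => if_neg hn.not_gt
  obtain ⟨z, hz⟩ := hB _ ((hY.cons hN hNY).cons isClosed_singleton hN0) d hd_antitone hd_nonneg
    hd_tendsto
  refine ⟨z, ((hY.isClosed 0).mem_iff_infDist_zero ⟨0, (Y 0).zero_mem⟩).2 (hz 2), ?_, hz 1⟩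
  rw [← dist_zero_right, ← infDist_singleton]
  exact hz 0

theorem attainsNorm (hB : PropertyB 𝕜 X) (hY : IsNestedSystem 𝕜 Y) {C : Submodule 𝕜 X}
    (hC : IsClosed (C : Set X)) (hCY : C < Y 0) {u : StrongDual 𝕜 C} (hu : u ≠ 0) :
    AttainsNorm u := by
  obtain ⟨e, he⟩ := DFunLike.ne_iff.1 hu
  rcases eq_or_ne u.ker ⊥ with hker | hker
  · refine attainsNorm_of_infDist_ker_eq_norm (z := e) (fun h0 => he (by rw [h0, map_zero]; rfl)) ?_
    rw [hker, Submodule.bot_coe, infDist_singleton, dist_zero_right]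
  have hN : IsClosed (u.ker.map C.subtype : Set X) :=
    hC.isClosedEmbedding_subtypeVal.isClosedMap _ u.isClosed_ker
  have hN0 : ⊥ < u.ker.map C.subtype := bot_lt_iff_ne_bot.2 fun h0 =>
    hker (Submodule.map_injective_of_injective C.subtype_injective
      (h0.trans (Submodule.map_bot _).symm))
  have hNC : u.ker.map C.subtype < C := by
    refine (Submodule.map_subtype_le _ _).lt_of_not_ge fun hle => ?_
    obtain ⟨y, hy, hye⟩ := hle e.2
    exact he (C.subtype_injective hye ▸ hy)
  obtain ⟨z, hzC, hz, hdist⟩ := hB.exists_norm_eq_one_infDist_eq_one (hY.cons hC hCY) hN hN0 hNC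
  lift z to C using hzC
  refine attainsNorm_of_infDist_ker_eq_norm (z := z) (norm_ne_zero_iff.1 (hz.trans_ne one_ne_zero))
    ?_
  rw [← infDist_image isometry_subtype_coe]
  exact hdist.trans hz.symm

theorem not_isJamesSequence (hB : PropertyB 𝕜 X) (hY : IsNestedSystem 𝕜 Y) {θ : ℝ} {x : ℕ → X}
    {f : ℕ → StrongDual 𝕜 X} (hxY : ∀ n, x n ∈ Y 0) : ¬ IsJamesSequence θ x f := by
  intro h
  let C : Submodule 𝕜 X := (Submodule.span 𝕜 (Set.range x)).topologicalClosure
  have hxC (n : ℕ) : x n ∈ C :=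
    Submodule.le_topologicalClosure _ (Submodule.subset_span (Set.mem_range_self n))
  have hCY : C ≤ Y 0 := Submodule.topologicalClosure_minimal _
    (Submodule.span_le.2 (Set.range_subset_iff.2 hxY)) (hY.isClosed 0)
  obtain ⟨u, hu, hnot⟩ := (h.restrict hxC).exists_ne_zero_not_attainsNorm fun z =>
    h.tendsto_apply z.2
  exact hnot (hB.attainsNorm (hY.shift 1) (Submodule.isClosed_topologicalClosure _)
    (hCY.trans_lt (hY.lt_succ 0)) hu)

theorem surjective_inclusionInDoubleDual_of_isNestedSystem [CompleteSpace X]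
    (hB : PropertyB 𝕜 X) (hY : IsNestedSystem 𝕜 Y) (n : ℕ) :
    Function.Surjective (NormedSpace.inclusionInDoubleDual 𝕜 (Y n)) := by
  by_contra hrefl
  have := (hY.isClosed n).completeSpace_coe
  obtain ⟨θ, x, f, h, -⟩ := exists_isJamesSequence_mem_polar hrefl (Z := fun _ => ⊥)
    monotone_const fun _ => surjective_inclusionInDoubleDual_of_finiteDimensional 𝕜 _
  obtain ⟨g, hg⟩ := h.exists_extension
  refine hB.not_isJamesSequence (hY.shift n) (fun k => ?_) hg
  rw [zero_add]
  exact (x k).2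

end PropertyB

/-- Let `X` be a real or complex Banach space which, if infinite-dimensional, has at least one
strictly increasing sequence of closed subspaces with dense union. If `X` has property (B), then
`X` is reflexive. -/
theorem stmt_17 {𝕜 X : Type*} [RCLike 𝕜] [NormedAddCommGroup X] [NormedSpace 𝕜 X]
    [CompleteSpace X]
    (hX : ¬ FiniteDimensional 𝕜 X → ∃ Y : ℕ → Submodule 𝕜 X, IsNestedSystem 𝕜 Y)
    (hB : PropertyB 𝕜 X) :
    Function.Surjective (NormedSpace.inclusionInDoubleDual 𝕜 X) := by
  by_cases hfin : FiniteDimensional 𝕜 X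
  · exact surjective_inclusionInDoubleDual_of_finiteDimensional 𝕜 X
  obtain ⟨Z, hZ⟩ := hX hfin
  by_contra hrefl
  obtain ⟨θ, x, f, hxf, hfZ⟩ := exists_isJamesSequence_mem_polar hrefl hZ.monotone
    (hB.surjective_inclusionInDoubleDual_of_isNestedSystem hZ)
  obtain ⟨Y, hY, hxY⟩ := hxf.exists_isNestedSystem hZ hfZ
  exact hB.not_isJamesSequence hY hxY
    (hxf.comp_strictMono (strictMono_mul_left_of_pos Nat.zero_lt_two))
end
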